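/- arXiv:2605.25444 — 2 statements merged into one kernel-verified Lean document; each statement's English description precedes it below -/
import Mathlib

section
/- For every real η > 0 there exists n₀ such that for every even n ≥ n₀ the following holds: for every signing M of K_{n,n} with s(M) ≥ η·n⁴, there exist families of permutations π_j, ρ_j of Fin n indexed by j : Fin (n/2) such that (a) π_j i ≠ ρ_j i for all j and i; (b) for every pair (i, k) there is exactly one occurrence of k among the values π_1 i, …, π_{n/2} i, ρ_1 i, …, ρ_{n/2} i (so the 2-factors F_j decompose K_{n,n}); (c) for every j the permutation (ρ_j)⁻¹ ∘ π_j is a fixed-point-free involution (so every component of F_j is a C₄); and (d) for every j, the number of unordered pairs {i, i'} with (ρ_j)⁻¹(π_j i) = i', i ≠ i', and M i (π_j i) + M i' (π_j i') ≠ M i (ρ_j i) + M i' (ρ_j i') is at least η·n. -/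
open Finset

/-- `M` is a signing of `K_{n,n}`: every entry is `+1` or `-1`. -/
def IsSigning (n : ℕ) (M : Fin n → Fin n → ℤ) : Prop :=
  ∀ i j, M i j = 1 ∨ M i j = -1

/-- `s(M)`: the number of switchers of `M`. -/
def switcherCount (n : ℕ) (M : Fin n → Fin n → ℤ) : ℕ :=
  (univ.filter fun p : Fin n × Fin n × Fin n × Fin n =>
    p.1 < p.2.1 ∧ p.2.2.1 < p.2.2.2 ∧
      M p.1 p.2.2.1 + M p.2.1 p.2.2.2 ≠ M p.1 p.2.2.2 + M p.2.1 p.2.2.1).card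

/-
Write `n = 2m` and pair up the rows and the columns. A matching of the `m` row pairs with the `m`
column pairs turns into a union of `C₄`s once each matched pair of pairs is filled in by its
straight and its crossed matching, and the `m` cyclic shifts of one matching of pairs decompose
`K_{n,n}`. Averaging over random pairings, some choice of them gives an `m × m` zero-one matrix of
switching blocks of density at least `4η`: every switcher accounts for four of the at most `n⁴`
ordered choices of two rows and two columns. For a random matching of pairs the number of switching
blocks in a fixed shift is a sum along a random permutation, so it concentrates: Hoeffding's lemma,
applied to the images of the rows revealed one by one, shows that it drops below half its mean
`4ηm` with probability at most `exp (-2η²m)`. For large `m` this survives a union bound over the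
`m` shifts, which leaves `2ηm = ηn` switchers in every factor.
-/

open scoped BigOperators

section Hoeffding

variable {ι α κ : Type*} [Fintype ι] [Fintype α] [Fintype κ]

open MeasureTheory ProbabilityTheory in
lemma expect_exp_mul_sub_expect_le [Nonempty ι] {y : ι → ℝ} {a b : ℝ}
    (hy : ∀ i, y i ∈ Set.Icc a b) (t : ℝ) :
    𝔼 i, Real.exp (t * (y i - 𝔼 j, y j)) ≤ Real.exp ((b - a) ^ 2 * t ^ 2 / 8) := by
  let _ : MeasurableSpace ι := ⊤
  let μ : Measure ι := uniformOn Set.univ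
  have integral_eq_expect (f : ι → ℝ) : ∫ i, f i ∂μ = 𝔼 i, f i := by
    have measure_singleton (i : ι) : μ.real {i} = (Fintype.card ι : ℝ)⁻¹ := by
      simp [μ, Measure.real, uniformOn_univ]
    simp only [integral_fintype .of_finite, measure_singleton, smul_eq_mul, ← mul_sum,
      Fintype.expect_eq_sum_div_card, div_eq_inv_mul]
  have hoeffding := (hasSubgaussianMGF_of_mem_Icc (μ := μ) (X := y)
    (Measurable.of_discrete).aemeasurable (.of_forall hy)).mgf_le t
  simp only [mgf, integral_eq_expect] at hoeffding
  refine hoeffding.trans_eq (congrArg Real.exp ?_)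
  push_cast
  rw [div_pow, Real.norm_eq_abs, sq_abs]
  ring

lemma card_mul_expect_swap_some_sub_expect [DecidableEq α] (g : Option α → ℝ) (p : Option α) :
    Fintype.card α * (𝔼 c, g (Equiv.swap none p (some c)) - 𝔼 c, g c) = 𝔼 c, g c - g p := by
  have sum_eq : ∑ c, g (Equiv.swap none p (some c)) = ∑ c, g c - g p := by
    rw [← Equiv.sum_comp (Equiv.swap none p) g, Fintype.sum_option, Equiv.swap_apply_left,
      add_sub_cancel_left]
  have card_mul := Fintype.card_mul_expect g
  rw [mul_sub, Fintype.card_mul_expect, sum_eq, ← card_mul, Fintype.card_option]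
  push_cast
  ring

/- Reveal `σ none = p` first: conditionally on it, `σ` is a uniform bijection of the remaining rows
and columns, and the conditional mean of the sum differs from the unconditional one by the centred
version of `A none p - 𝔼 r, A (some r) p`. -/
lemma sum_decomposeOption_sub_expect [DecidableEq α] (A : Option α → Option α → ℝ) (p : Option α)
    (σ : Equiv.Perm α) :
    ∑ r, A r (Equiv.Perm.decomposeOption.symm (p, σ) r) - ∑ r, 𝔼 c, A r c =
      ((A none p - 𝔼 r, A (some r) p) - 𝔼 q, (A none q - 𝔼 r, A (some r) q)) +
        (∑ r, A (some r) (Equiv.swap none p (some (σ r))) -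
          ∑ r, 𝔼 c, A (some r) (Equiv.swap none p (some c))) := by
  have conditional_mean :
      ∑ r, 𝔼 c, A (some r) (Equiv.swap none p (some c)) - ∑ r, 𝔼 c, A (some r) c =
        𝔼 q, 𝔼 r, A (some r) q - 𝔼 r, A (some r) p := by
    rw [expect_comm, ← expect_sub_distrib, ← sum_sub_distrib]
    simp only [← card_mul_expect_swap_some_sub_expect (A (some _)) p, ← mul_expect]
    rw [Fintype.card_mul_expect]
  rw [Fintype.sum_option, Fintype.sum_option, expect_sub_distrib]
  simp only [Equiv.Perm.decomposeOption_symm_apply, Equiv.Perm.mul_apply,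
    Equiv.optionCongr_apply, Option.map_none, Option.map_some, Equiv.swap_apply_left]
  linarith

lemma expect_exp_mul_perm_sum_option_le [DecidableEq α] {A : Option α → Option α → ℝ}
    (hA : ∀ r c, A r c ∈ Set.Icc 0 1) {t C : ℝ}
    (ih : ∀ B : α → α → ℝ, (∀ r c, B r c ∈ Set.Icc 0 1) →
      𝔼 σ : Equiv.Perm α, Real.exp (t * (∑ r, B r (σ r) - ∑ r, 𝔼 c, B r c)) ≤ C) :
    𝔼 σ : Equiv.Perm (Option α), Real.exp (t * (∑ r, A r (σ r) - ∑ r, 𝔼 c, A r c)) ≤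
      Real.exp (t ^ 2 / 2) * C := by
  let y (p : Option α) : ℝ := A none p - 𝔼 r, A (some r) p
  have hy (p : Option α) : y p ∈ Set.Icc (-1) 1 := by
    have mean_nonneg : 0 ≤ 𝔼 r, A (some r) p := expect_nonneg fun r _ => (hA _ _).1
    have mean_le_one : 𝔼 r, A (some r) p ≤ 1 := by
      rcases isEmpty_or_nonempty α with _ | _
      · simp
      · exact expect_le univ_nonempty fun r _ => (hA _ _).2
    constructor <;> simp only [y] <;> linarith [(hA none p).1, (hA none p).2]
  have C_nonneg : 0 ≤ C := (expect_nonneg fun _ _ => (Real.exp_pos _).le).trans (ih 0 (by simp))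
  calc 𝔼 σ : Equiv.Perm (Option α), Real.exp (t * (∑ r, A r (σ r) - ∑ r, 𝔼 c, A r c))
      = 𝔼 p, 𝔼 σ : Equiv.Perm α, Real.exp (t * (y p - 𝔼 q, y q)) *
          Real.exp (t * (∑ r, A (some r) (Equiv.swap none p (some (σ r))) -
            ∑ r, 𝔼 c, A (some r) (Equiv.swap none p (some c)))) := by
        rw [← expect_product', univ_product_univ]
        refine (Fintype.expect_equiv Equiv.Perm.decomposeOption.symm _ _ fun ⟨p, σ⟩ => ?_).symm
        rw [sum_decomposeOption_sub_expect, ← Real.exp_add, ← mul_add]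
    _ ≤ 𝔼 p, Real.exp (t * (y p - 𝔼 q, y q)) * C := by
        refine expect_le_expect fun p _ => ?_
        rw [← mul_expect]
        have conditional_bound := ih (fun r c => A (some r) (Equiv.swap none p (some c)))
          fun _ _ => hA _ _
        exact mul_le_mul_of_nonneg_left conditional_bound (Real.exp_pos _).le
    _ ≤ Real.exp (t ^ 2 / 2) * C := by
        rw [← expect_mul]
        refine mul_le_mul_of_nonneg_right ?_ C_nonneg
        exact (expect_exp_mul_sub_expect_le hy t).trans_eq (by ring_nf)

theorem expect_exp_mul_perm_sum_le [DecidableEq α] {A : α → α → ℝ}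
    (hA : ∀ r c, A r c ∈ Set.Icc 0 1) (t : ℝ) :
    𝔼 σ : Equiv.Perm α, Real.exp (t * (∑ r, A r (σ r) - ∑ r, 𝔼 c, A r c)) ≤
      Real.exp (Fintype.card α * t ^ 2 / 2) := by
  let Bound (β : Type _) [Fintype β] : Prop := ∀ [DecidableEq β] (B : β → β → ℝ),
    (∀ r c, B r c ∈ Set.Icc 0 1) →
    𝔼 σ : Equiv.Perm β, Real.exp (t * (∑ r, B r (σ r) - ∑ r, 𝔼 c, B r c)) ≤
      Real.exp (Fintype.card β * t ^ 2 / 2)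
  refine Fintype.induction_empty_option (P := Bound) ?_ ?_ ?_ α A hA
  · intro β γ _ e bound _ B hB
    let _ := Fintype.ofEquiv γ e.symm
    let _ : DecidableEq β := Classical.decEq β
    refine le_of_eq_of_le ?_ ((bound (fun r c => B (e r) (e c)) fun _ _ => hB _ _).trans_eq ?_)
    · refine (Fintype.expect_equiv e.permCongr _ _ fun σ => ?_).symm
      simp only [← e.sum_comp, Equiv.permCongr_apply, Equiv.symm_apply_apply,
        Fintype.expect_equiv e (fun c => B (e _) (e c)) (B (e _)) fun _ => rfl]
    · rw [Fintype.card_congr e]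
  · intro _ B _
    simp
  · intro β _ bound decEq B hB
    classical
    obtain rfl : decEq = Option.instDecidableEq := Subsingleton.elim _ _
    refine (expect_exp_mul_perm_sum_option_le hB bound).trans_eq ?_
    rw [← Real.exp_add, Fintype.card_option]
    push_cast
    ring_nf

theorem exists_perm_forall_sub_le_sum {A : κ → α → α → ℝ} (hA : ∀ k r c, A k r c ∈ Set.Icc 0 1)
    {δ : ℝ} (hδ : 0 < δ) (hκ : Fintype.card κ < Real.exp (Fintype.card α * δ ^ 2 / 2)) :
    ∃ σ : Equiv.Perm α, ∀ k, ∑ r, 𝔼 c, A k r c - Fintype.card α * δ ≤ ∑ r, A k r (σ r) := by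
  classical
  have expect_lt :
      𝔼 σ : Equiv.Perm α, ∑ k, Real.exp (-δ * (∑ r, A k r (σ r) - ∑ r, 𝔼 c, A k r c)) <
        Real.exp (Fintype.card α * δ ^ 2) := by
    calc _ = ∑ k, 𝔼 σ : Equiv.Perm α,
              Real.exp (-δ * (∑ r, A k r (σ r) - ∑ r, 𝔼 c, A k r c)) := expect_sum_comm ..
      _ ≤ ∑ _k : κ, Real.exp (Fintype.card α * (-δ) ^ 2 / 2) :=
          sum_le_sum fun k _ => expect_exp_mul_perm_sum_le (hA k) (-δ)
      _ = Fintype.card κ * Real.exp (Fintype.card α * δ ^ 2 / 2) := by simp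
      _ < Real.exp (Fintype.card α * δ ^ 2 / 2) * Real.exp (Fintype.card α * δ ^ 2 / 2) :=
          mul_lt_mul_of_pos_right hκ (Real.exp_pos _)
      _ = Real.exp (Fintype.card α * δ ^ 2) := by rw [← Real.exp_add, add_halves]
  obtain ⟨σ, -, hσ⟩ := exists_lt_of_expect_lt univ_nonempty expect_lt
  refine ⟨σ, fun k => ?_⟩
  have exp_lt := (single_le_sum (fun _ _ => (Real.exp_pos _).le) (mem_univ k)).trans_lt hσ
  have scaled_bound := Real.exp_lt_exp.1 exp_lt
  refine sub_le_comm.1 (le_of_mul_le_mul_left ?_ hδ)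
  linarith

end Hoeffding

section Pairings

variable {ι α : Type*} [Fintype α]

lemma expect_perm_apply_pair [DecidableEq α] (f : α → α → ℝ) {a b : α} (hab : a ≠ b) :
    𝔼 σ : Equiv.Perm α, f (σ a) (σ b) = 𝔼 p ∈ univ.offDiag, f p.1 p.2 := by
  have expect_eq_of_ne {c d : α} (hcd : c ≠ d) :
      𝔼 σ : Equiv.Perm α, f (σ c) (σ d) = 𝔼 σ : Equiv.Perm α, f (σ a) (σ b) := by
    obtain ⟨τ, rfl, rfl⟩ := MulAction.is_two_pretransitive_iff.1
      (Equiv.Perm.isMultiplyPretransitive α 2) hcd hab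
    exact (Fintype.expect_equiv (Equiv.mulRight τ) _ _ fun _ => rfl).symm
  have offDiag_nonempty : (univ : Finset α).offDiag.Nonempty := ⟨(a, b), by simpa using hab⟩
  calc 𝔼 σ : Equiv.Perm α, f (σ a) (σ b)
      = 𝔼 p ∈ univ.offDiag, 𝔼 σ : Equiv.Perm α, f (σ p.1) (σ p.2) := by
        rw [expect_congr rfl fun p hp => expect_eq_of_ne (mem_offDiag.1 hp).2.2,
          expect_const offDiag_nonempty]
    _ = 𝔼 σ : Equiv.Perm α, 𝔼 p ∈ univ.offDiag, f (σ p.1) (σ p.2) := expect_comm ..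
    _ = 𝔼 _σ : Equiv.Perm α, 𝔼 p ∈ univ.offDiag, f p.1 p.2 :=
        expect_congr rfl fun σ _ => expect_equiv (σ.prodCongr σ) (by simp) fun _ _ => rfl
    _ = 𝔼 p ∈ univ.offDiag, f p.1 p.2 := Fintype.expect_const _

theorem exists_pairing_expect_offDiag_le [Fintype ι] [Nonempty ι]
    (e : ι × Bool ≃ α) (f : α → α → ℝ) :
    ∃ R : ι × Bool ≃ α,
      𝔼 p ∈ univ.offDiag, f p.1 p.2 ≤ 𝔼 r, f (R (r, false)) (R (r, true)) := by
  classical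
  have expect_eq : 𝔼 σ : Equiv.Perm α, 𝔼 r, f (σ (e (r, false))) (σ (e (r, true))) =
      𝔼 p ∈ univ.offDiag, f p.1 p.2 := by
    rw [expect_comm, expect_congr rfl fun r _ => expect_perm_apply_pair f (by simp),
      Fintype.expect_const]
  obtain ⟨σ, -, hσ⟩ := exists_le_of_le_expect univ_nonempty expect_eq.ge
  exact ⟨e.trans σ, hσ⟩

lemma two_mul_sum_filter_lt [LinearOrder α] {f : α → α → ℝ} (hf : ∀ a b, f a b = f b a) :
    2 * ∑ p : α × α with p.1 < p.2, f p.1 p.2 = ∑ p ∈ univ.offDiag, f p.1 p.2 := by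
  have sum_gt_eq : ∑ p : α × α with p.2 < p.1, f p.1 p.2 = ∑ p : α × α with p.1 < p.2, f p.1 p.2 :=
    sum_equiv (Equiv.prodComm α α) (by simp) fun p _ => hf p.1 p.2
  have offDiag_eq : (univ : Finset α).offDiag =
      ({p | p.1 < p.2 ∨ p.2 < p.1} : Finset (α × α)) := by
    ext p
    simp
  have disjoint_lt_gt : Disjoint ({p | p.1 < p.2} : Finset (α × α))
      ({p | p.2 < p.1} : Finset (α × α)) :=
    disjoint_filter.2 fun _ _ h => h.asymm
  rw [offDiag_eq, filter_or, sum_union disjoint_lt_gt, sum_gt_eq, two_mul]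

end Pairings

section Switchers

variable {ι α β G : Type*}

/-- The `2 × 2` submatrix of `M` on rows `a`, `c` and columns `b`, `d` has distinct diagonal and
antidiagonal sums; for a signing this says that the corresponding `C₄` is a switcher. -/
def IsSwitcher [Add G] (M : α → β → G) (a c : α) (b d : β) : Prop :=
  M a b + M c d ≠ M a d + M c b

instance [Add G] [DecidableEq G] (M : α → β → G) (a c : α) (b d : β) :
    Decidable (IsSwitcher M a c b d) :=
  inferInstanceAs (Decidable (_ ≠ _))

lemma isSwitcher_comm_left [AddCommMagma G] {M : α → β → G} {a c : α} {b d : β} :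
    IsSwitcher M a c b d ↔ IsSwitcher M c a b d := by
  rw [IsSwitcher, IsSwitcher, ne_comm, add_comm (M c b), add_comm (M c d)]

lemma isSwitcher_comm_right [Add G] {M : α → β → G} {a c : α} {b d : β} :
    IsSwitcher M a c b d ↔ IsSwitcher M a c d b :=
  ne_comm

variable [Fintype α] [Fintype β] [LinearOrder α] [LinearOrder β] [DecidableEq G]

/-- The switchers of `M`, as quadruples of two increasing rows followed by two increasing
columns; for an integer matrix their number is `switcherCount`. -/
def switchers [Add G] (M : α → β → G) : Finset (α × α × β × β) :=
  {p | p.1 < p.2.1 ∧ p.2.2.1 < p.2.2.2 ∧ IsSwitcher M p.1 p.2.1 p.2.2.1 p.2.2.2}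

lemma card_switchers_eq_sum [Add G] (M : α → β → G) :
    (#(switchers M) : ℝ) = ∑ p : α × α with p.1 < p.2, ∑ q : β × β with q.1 < q.2,
      if IsSwitcher M p.1 p.2 q.1 q.2 then 1 else 0 := by
  rw [← sum_product', sum_boole, Nat.cast_inj]
  refine card_equiv (Equiv.prodAssoc α α (β × β)).symm fun p => ?_
  simp [switchers, and_assoc]

lemma four_mul_card_switchers_eq [AddCommMagma G] (M : α → β → G) :
    4 * (#(switchers M) : ℝ) = ∑ p ∈ univ.offDiag, ∑ q ∈ univ.offDiag,
      if IsSwitcher M p.1 p.2 q.1 q.2 then 1 else 0 := by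
  let S (a c : α) (b d : β) : ℝ := if IsSwitcher M a c b d then 1 else 0
  calc 4 * (#(switchers M) : ℝ)
      = 2 * ∑ p : α × α with p.1 < p.2, 2 * ∑ q : β × β with q.1 < q.2, S p.1 p.2 q.1 q.2 := by
        rw [card_switchers_eq_sum, ← mul_sum, ← mul_assoc]
        norm_num only [S]
    _ = 2 * ∑ p : α × α with p.1 < p.2, ∑ q ∈ univ.offDiag, S p.1 p.2 q.1 q.2 :=
        congrArg _ <| sum_congr rfl fun p _ => two_mul_sum_filter_lt (f := S p.1 p.2) fun _ _ =>
          if_congr isSwitcher_comm_right rfl rfl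
    _ = ∑ p ∈ univ.offDiag, ∑ q ∈ univ.offDiag, S p.1 p.2 q.1 q.2 :=
        two_mul_sum_filter_lt (f := fun a c => ∑ q ∈ univ.offDiag, S a c q.1 q.2) fun _ _ =>
          sum_congr rfl fun _ _ => if_congr isSwitcher_comm_left rfl rfl

lemma card_offDiag_univ_le_sq (γ : Type*) [Fintype γ] :
    #(univ : Finset γ).offDiag ≤ Fintype.card γ ^ 2 := by
  classical
  rw [offDiag_card, card_univ, sq]
  exact Nat.sub_le _ _

lemma four_mul_card_switchers_le [AddCommMagma G] (M : α → β → G) :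
    4 * (#(switchers M) : ℝ) ≤ Fintype.card α ^ 2 * Fintype.card β ^ 2 *
      𝔼 p ∈ univ.offDiag, 𝔼 q ∈ univ.offDiag,
        if IsSwitcher M p.1 p.2 q.1 q.2 then 1 else 0 := by
  rw [four_mul_card_switchers_eq]
  simp only [← card_mul_expect, ← mul_expect, ← mul_assoc]
  gcongr
  · exact_mod_cast card_offDiag_univ_le_sq α
  · exact_mod_cast card_offDiag_univ_le_sq β

theorem exists_pairings_forall_le_card [AddCommMagma G] [Fintype ι] [AddGroup ι]
    (eα : ι × Bool ≃ α) (eβ : ι × Bool ≃ β) {M : α → β → G} {η : ℝ} (hη : 0 < η)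
    (hM : η * (Fintype.card α ^ 2 * Fintype.card β ^ 2) ≤ #(switchers M))
    (hι : Fintype.card ι < Real.exp (Fintype.card ι * (2 * η) ^ 2 / 2)) :
    ∃ (R : ι × Bool ≃ α) (C : ι × Bool ≃ β) (σ : Equiv.Perm ι), ∀ j,
      Fintype.card ι * (2 * η) ≤ #{r | IsSwitcher M (R (r, false)) (R (r, true))
        (C (σ r + j, false)) (C (σ r + j, true))} := by
  let S (a c : α) (b d : β) : ℝ := if IsSwitcher M a c b d then 1 else 0
  have S_mem (a c b d) : S a c b d ∈ Set.Icc 0 1 := by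
    simp only [S]
    split_ifs <;> simp
  have : Nonempty α := ⟨eα (0, true)⟩
  have : Nonempty β := ⟨eβ (0, true)⟩
  have switcher_density :
      4 * η ≤ 𝔼 p ∈ univ.offDiag, 𝔼 q ∈ univ.offDiag, S p.1 p.2 q.1 q.2 := by
    have four_mul_card_le := four_mul_card_switchers_le M
    refine le_of_mul_le_mul_left (a := (Fintype.card α ^ 2 * Fintype.card β ^ 2 : ℝ)) ?_
      (by positivity)
    linarith
  obtain ⟨R, hR⟩ := exists_pairing_expect_offDiag_le eα fun a c => 𝔼 q ∈ univ.offDiag, S a c q.1 q.2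
  obtain ⟨C, hC⟩ := exists_pairing_expect_offDiag_le eβ fun b d =>
    𝔼 r, S (R (r, false)) (R (r, true)) b d
  let A (r c : ι) : ℝ := S (R (r, false)) (R (r, true)) (C (c, false)) (C (c, true))
  have block_density : Fintype.card ι * (4 * η) ≤ ∑ r, 𝔼 c, A r c := by
    rw [← Fintype.card_mul_expect]
    gcongr
    rw [expect_comm] at hC ⊢
    exact switcher_density.trans (hR.trans hC)
  obtain ⟨σ, hσ⟩ := exists_perm_forall_sub_le_sum (A := fun j r c => A r (c + j))
    (fun _ _ _ => S_mem _ _ _ _) (δ := 2 * η) (by positivity) hι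
  refine ⟨R, C, σ, fun j => ?_⟩
  have expect_shift (r : ι) : 𝔼 c, A r (c + j) = 𝔼 c, A r c :=
    Fintype.expect_equiv (Equiv.addRight j) _ _ fun _ => rfl
  have concentration := hσ j
  simp only [expect_shift, A, S, sum_boole] at concentration block_density
  linarith

end Switchers

section FourCycleFactorizations

variable {ι κ J α G : Type*}

/-- The pairs `(π j, ρ j)` of perfect matchings of `K_{α,α}` span 2-factors that decompose
`K_{α,α}` and all of whose components are `C₄`s. The `Bool` tells `π j` (`true`) from `ρ j`. -/
structure IsFourCycleFactorization (π ρ : J → Equiv.Perm α) : Prop where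
  apply_ne : ∀ j i, π j i ≠ ρ j i
  existsUnique : ∀ i k, ∃! jb : J × Bool, (if jb.2 then π jb.1 i else ρ jb.1 i) = k
  inv_mul_sq : ∀ j, ((ρ j)⁻¹ * π j) * ((ρ j)⁻¹ * π j) = 1

lemma IsFourCycleFactorization.inv_mul_apply_ne {π ρ : J → Equiv.Perm α}
    (h : IsFourCycleFactorization π ρ) (j : J) (i : α) : ((ρ j)⁻¹ * π j) i ≠ i :=
  fun fixed => h.apply_ne j i (Equiv.Perm.inv_eq_iff_eq.1 fixed)

/-- The perfect matching that sends the row pair `r` of `R` to the column pair `τ r` of `C`, with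
`ε` matching the two members of each pair. Taking `ε` to be the identity and the flip gives the two
matchings of a 2-factor into `C₄`s, one for each `r`. -/
def blockMatching (R : ι × Bool ≃ α) (C : κ × Bool ≃ α) (τ : ι ≃ κ) (ε : Equiv.Perm Bool) :
    Equiv.Perm α :=
  R.symm.trans ((τ.prodCongr ε).trans C)

variable (R : ι × Bool ≃ α) (C : κ × Bool ≃ α)

@[simp]
lemma blockMatching_apply (τ : ι ≃ κ) (ε : Equiv.Perm Bool) (r : ι) (x : Bool) :
    blockMatching R C τ ε (R (r, x)) = C (τ r, ε x) := by
  simp [blockMatching]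

lemma blockMatching_inv_apply_blockMatching (τ : ι ≃ κ) (r : ι) (x : Bool) :
    (blockMatching R C τ Equiv.boolNot)⁻¹ (blockMatching R C τ 1 (R (r, x))) = R (r, !x) := by
  rw [Equiv.Perm.inv_eq_iff_eq]
  simp

theorem isFourCycleFactorization_blockMatching {τ : J → ι ≃ κ} (hτ : ∀ r c, ∃! j, τ j r = c) :
    IsFourCycleFactorization (fun j => blockMatching R C (τ j) 1)
      fun j => blockMatching R C (τ j) Equiv.boolNot where
  apply_ne j i := by
    obtain ⟨⟨r, x⟩, rfl⟩ := R.surjective i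
    simp
  existsUnique i k := by
    obtain ⟨⟨r, x⟩, rfl⟩ := R.surjective i
    obtain ⟨⟨c, z⟩, rfl⟩ := C.surjective k
    obtain ⟨j, rfl, j_unique⟩ := hτ r c
    refine ⟨(j, x == z), by cases x <;> cases z <;> simp, fun ⟨j', b⟩ h => ?_⟩
    obtain ⟨same_block, hx⟩ : τ j' r = τ j r ∧ (if b then x else !x) = z := by
      cases b <;> simpa using h
    obtain rfl := j_unique j' same_block
    obtain rfl := hx
    cases b <;> cases x <;> rfl
  inv_mul_sq j := by
    ext i
    obtain ⟨⟨r, x⟩, rfl⟩ := R.surjective i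
    simp only [Equiv.Perm.mul_apply, blockMatching_inv_apply_blockMatching, Bool.not_not,
      Equiv.Perm.one_apply]

variable [Fintype ι] [Fintype α] [LinearOrder α] [DecidableEq G]

/-- The pairs of rows `a < c` that carry a `C₄`-component of `π ∪ ρ` which is a switcher of `M`. -/
def switcherComponents [Add G] (M : α → α → G) (π ρ : Equiv.Perm α) : Finset (α × α) :=
  {p | p.1 < p.2 ∧ ρ⁻¹ (π p.1) = p.2 ∧
    M p.1 (π p.1) + M p.2 (π p.2) ≠ M p.1 (ρ p.1) + M p.2 (ρ p.2)}

theorem card_isSwitcher_le_card_switcherComponents [AddCommMagma G] (M : α → α → G) (τ : ι ≃ κ) :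
    #{r | IsSwitcher M (R (r, false)) (R (r, true)) (C (τ r, false)) (C (τ r, true))} ≤
      #(switcherComponents M (blockMatching R C τ 1) (blockMatching R C τ Equiv.boolNot)) := by
  let first (r : ι) : Bool := decide (R (r, true) < R (r, false))
  refine card_le_card_of_injOn (fun r => (R (r, first r), R (r, !first r))) ?_ ?_
  · intro r hr
    have ordered : R (r, first r) < R (r, !first r) := by
      rcases (R.injective.ne (by simp : (r, true) ≠ (r, false))).lt_or_gt with h | h
      · simp [first, h]
      · simpa [first, h.not_gt] using h
    have switcher : IsSwitcher M (R (r, first r)) (R (r, !first r))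
        (C (τ r, first r)) (C (τ r, !first r)) := by
      cases first r
      · exact (mem_filter.1 hr).2
      · exact isSwitcher_comm_left.1 (isSwitcher_comm_right.1 (mem_filter.1 hr).2)
    refine mem_filter.2 ⟨mem_univ _, ordered, blockMatching_inv_apply_blockMatching .., ?_⟩
    simpa [IsSwitcher] using switcher
  · intro r _ s _ same_rows
    have same_first_row := R.injective (Prod.ext_iff.1 same_rows).1
    exact (Prod.ext_iff.1 same_first_row).1

end FourCycleFactorizations

lemma eventually_natCast_lt_exp_mul {c : ℝ} (hc : 0 < c) :
    ∀ᶠ m : ℕ in Filter.atTop, (m : ℝ) < Real.exp (m * c) := by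
  have isLittleO := (isLittleO_pow_exp_pos_mul_atTop 1 hc).comp_tendsto
    (tendsto_natCast_atTop_atTop (R := ℝ))
  filter_upwards [isLittleO.bound one_half_pos] with m hm
  have exp_pos := Real.exp_pos (m * c)
  simp only [Function.comp_apply, pow_one, Real.norm_eq_abs, Nat.abs_cast, Real.abs_exp,
    mul_comm c] at hm
  linarith

theorem even_case_switcher_rich_two_factorization_general {η : ℝ} (hη : 0 < η) :
    ∃ n₀ : ℕ, ∀ n, n₀ ≤ n → Even n →
      ∀ {G : Type*} [AddCommMagma G] [DecidableEq G] (M : Fin n → Fin n → G),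
        η * n ^ 4 ≤ #(switchers M) →
        ∃ π ρ : Fin (n / 2) → Equiv.Perm (Fin n), IsFourCycleFactorization π ρ ∧
          ∀ j, η * n ≤ #(switcherComponents M (π j) (ρ j)) := by
  obtain ⟨m₀, hm₀⟩ := Filter.eventually_atTop.1
    ((eventually_natCast_lt_exp_mul (c := (2 * η) ^ 2 / 2) (by positivity)).and
      (Filter.eventually_ne_atTop 0))
  refine ⟨2 * m₀, fun n hn hn_even G _ _ M hM => ?_⟩
  obtain ⟨m_lt_exp, m_ne_zero⟩ := hm₀ (n / 2) (by omega)
  have two_mul_m : 2 * (n / 2) = n := Nat.two_mul_div_two_of_even hn_even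
  have : NeZero (n / 2) := ⟨m_ne_zero⟩
  let e : Fin (n / 2) × Bool ≃ Fin n := Fintype.equivOfCardEq (by simp; omega)
  obtain ⟨R, C, σ, hσ⟩ := exists_pairings_forall_le_card e e hη
    (by simpa [← pow_add] using hM) (by simpa [mul_div_assoc] using m_lt_exp)
  let τ (j : Fin (n / 2)) : Equiv.Perm (Fin (n / 2)) := σ.trans (Equiv.addRight j)
  have latin (r c) : ∃! j, τ j r = c :=
    (Equiv.addLeft (σ r)).bijective.existsUnique c
  refine ⟨_, _, isFourCycleFactorization_blockMatching R C latin, fun j => ?_⟩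
  calc η * n = Fintype.card (Fin (n / 2)) * (2 * η) := by
        rw [Fintype.card_fin, ← congrArg Nat.cast two_mul_m]
        push_cast
        ring
    _ ≤ _ := hσ j
    _ ≤ _ := mod_cast card_isSwitcher_le_card_switcherComponents R C M (τ j)

theorem even_case_switcher_rich_two_factorization :
    ∀ η : ℝ, 0 < η →
    ∃ n₀ : ℕ, ∀ n : ℕ, n₀ ≤ n → Even n →
    ∀ M : Fin n → Fin n → ℤ, IsSigning n M →
    (switcherCount n M : ℝ) ≥ η * n ^ 4 →
    ∃ π ρ : Fin (n / 2) → Equiv.Perm (Fin n),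
      (∀ j i, π j i ≠ ρ j i) ∧
      (∀ i k : Fin n, ∃! jb : Fin (n / 2) × Bool,
        (if jb.2 then π jb.1 i else ρ jb.1 i) = k) ∧
      (∀ j, ((ρ j)⁻¹ * π j) * ((ρ j)⁻¹ * π j) = 1 ∧
        ∀ i, ((ρ j)⁻¹ * π j) i ≠ i) ∧
      (∀ j, ((univ.filter fun p : Fin n × Fin n =>
          p.1 < p.2 ∧ (ρ j)⁻¹ (π j p.1) = p.2 ∧
            M p.1 (π j p.1) + M p.2 (π j p.2) ≠
              M p.1 (ρ j p.1) + M p.2 (ρ j p.2)).card : ℝ) ≥ η * n) := by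
  intro η hη
  obtain ⟨n₀, hn₀⟩ := even_case_switcher_rich_two_factorization_general hη
  refine ⟨n₀, fun n hn hn_even M _ hM => ?_⟩
  obtain ⟨π, ρ, h, rich⟩ := hn₀ n hn hn_even M hM
  exact ⟨π, ρ, h.apply_ne, h.existsUnique,
    fun j => ⟨h.inv_mul_sq j, h.inv_mul_apply_ne j⟩, rich⟩
end

section
/- Let M be a signing of K_{n,n} with n ≥ 1, viewed as a real n × n matrix. Then the largest singular value σ₁ of M (equivalently, the ℓ²→ℓ² operator norm of M) satisfies σ₁² · n² ≥ n⁴ − 8·s₂(M). In particular, if s₂(M) ≤ α²·n⁴/64 for some real α ≥ 0, then σ₁ ≥ n·√(1 − α²/8). -/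
open Finset

/-- `s₂(M)`: the number of Type-2 switchers of `M`. -/
def type2SwitcherCount (n : ℕ) (M : Fin n → Fin n → ℤ) : ℕ :=
  (univ.filter fun p : Fin n × Fin n × Fin n × Fin n =>
    p.1 < p.2.1 ∧ p.2.2.1 < p.2.2.2 ∧
      M p.1 p.2.2.1 * M p.1 p.2.2.2 * M p.2.1 p.2.2.1 * M p.2.1 p.2.2.2 = -1).card

/-- The largest singular value of `M`, i.e. the `ℓ² → ℓ²` operator norm of `M`
viewed as a real matrix acting on Euclidean space. -/
noncomputable def sigma1 (n : ℕ) (M : Fin n → Fin n → ℤ) : ℝ :=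
  ‖LinearMap.toContinuousLinearMap
    (Matrix.toEuclideanLin (Matrix.of fun i j : Fin n => (M i j : ℝ)))‖

/-!
The rows of `M` serve as test vectors. Frobenius submultiplicativity `‖M Mᵀ‖_F ≤ σ₁ ‖M‖_F` gives
`∑_{a,c} ⟨M_a, M_c⟩² ≤ σ₁² n²`. Expanding the squares, the left-hand side is the sum over all
`a, c, b, d` of the `±1` products `M a b * M a d * M c b * M c d`. These equal `1` whenever `a = c`
or `b = d` and are invariant under swapping `a, c` and under swapping `b, d`, so exactly `4 s₂` of
the `n⁴` products are `-1`.
-/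

section LinearOrder

variable {ι R : Type*} [Fintype ι] [LinearOrder ι] [AddCommMonoid R]

theorem sum_sum_eq_two_nsmul_sum_sum_lt (g : ι → ι → R) (hsymm : ∀ a c, g a c = g c a)
    (hdiag : ∀ a, g a a = 0) : ∑ a, ∑ c, g a c = 2 • ∑ a, ∑ c with a < c, g a c := by
  have split_row (a : ι) : ∑ c, g a c = ∑ c with a < c, g a c + ∑ c with c < a, g a c := by
    simp only [sum_filter, ← sum_add_distrib]
    refine sum_congr rfl fun c _ => ?_
    rcases lt_trichotomy a c with h | rfl | h
    · simp [h, h.not_gt]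
    · simp [hdiag]
    · simp [h, h.not_gt]
  have swap : ∑ a, ∑ c with c < a, g a c = ∑ a, ∑ c with a < c, g a c := by
    rw [sum_comm' (t' := univ) (s' := fun c => {a | c < a}) (by simp)]
    exact sum_congr rfl fun a _ => sum_congr rfl fun c _ => hsymm c a
  rw [sum_congr rfl fun a _ => split_row a, sum_add_distrib, swap, two_nsmul]

end LinearOrder

section OperatorNorm

open scoped Matrix.Norms.L2Operator

variable {l m n : Type*} [Fintype l] [Fintype m] [Fintype n]

theorem sum_norm_sq_mul_le [DecidableEq m] {𝕜 : Type*} [RCLike 𝕜] (A : Matrix l m 𝕜)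
    (B : Matrix m n 𝕜) :
    ∑ k, ∑ i, ‖(A * B) i k‖ ^ 2 ≤ ‖A‖ ^ 2 * ∑ k, ∑ j, ‖B j k‖ ^ 2 := by
  rw [mul_sum]
  refine sum_le_sum fun k _ => ?_
  have column_le := A.l2_opNorm_mulVec (WithLp.toLp 2 (B.col k))
  have column_sq_le := pow_le_pow_left₀ (norm_nonneg _) column_le 2
  rwa [mul_pow, EuclideanSpace.norm_sq_eq, EuclideanSpace.norm_sq_eq] at column_sq_le

theorem sum_sq_dotProduct_row_le [DecidableEq n] (A : Matrix m n ℝ) :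
    ∑ a, ∑ c, (A a ⬝ᵥ A c) ^ 2 ≤ ‖A‖ ^ 2 * ∑ a, ∑ b, A a b ^ 2 := by
  rw [sum_comm]
  have frobenius := sum_norm_sq_mul_le A A.transpose
  simp only [Real.norm_eq_abs, sq_abs] at frobenius
  exact frobenius

theorem sigma1_eq_l2_opNorm (n : ℕ) (M : Fin n → Fin n → ℤ) :
    sigma1 n M = ‖Matrix.of fun i j => (M i j : ℝ)‖ :=
  rfl

end OperatorNorm

/-- The product of the entries of `A` at the corners of the rectangle with rows `a, c` and columns
`b, d`. A Type-2 switcher of a signing is a nondegenerate rectangle whose product is `-1`. -/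
def rectangleProduct {m n R : Type*} [Mul R] (A : m → n → R) (a c : m) (b d : n) : R :=
  A a b * A a d * A c b * A c d

section RectangleProduct

variable {m n R : Type*}

theorem rectangleProduct_swap_rows [CommSemigroup R] (A : m → n → R) (a c : m) (b d : n) :
    rectangleProduct A a c b d = rectangleProduct A c a b d := by
  simp only [rectangleProduct]
  ac_rfl

theorem rectangleProduct_swap_columns [CommSemigroup R] (A : m → n → R) (a c : m) (b d : n) :
    rectangleProduct A a c b d = rectangleProduct A a c d b := by
  simp only [rectangleProduct]
  ac_rfl

theorem sum_rectangleProduct_eq_sq_dotProduct [Fintype n] [CommSemiring R] (A : m → n → R)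
    (a c : m) : ∑ b, ∑ d, rectangleProduct A a c b d = (A a ⬝ᵥ A c) ^ 2 := by
  rw [sq, dotProduct, sum_mul_sum]
  refine sum_congr rfl fun b _ => sum_congr rfl fun d _ => ?_
  rw [rectangleProduct]
  ring

end RectangleProduct

theorem type2SwitcherCount_eq_sum (n : ℕ) (M : Fin n → Fin n → ℤ) :
    type2SwitcherCount n M = ∑ a, ∑ c with a < c, ∑ b, ∑ d with b < d,
      if rectangleProduct M a c b d = -1 then 1 else 0 := by
  simp only [type2SwitcherCount, card_filter, Fintype.sum_prod_type, sum_filter, ite_and,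
    sum_ite_irrel, sum_const_zero, rectangleProduct]
  rfl

namespace IsSigning

variable {n : ℕ} {M : Fin n → Fin n → ℤ}

theorem sq_apply (hM : IsSigning n M) (i j : Fin n) : M i j ^ 2 = 1 :=
  sq_eq_one_iff.mpr (hM i j)

theorem rectangleProduct_same_row (hM : IsSigning n M) (a b d : Fin n) :
    rectangleProduct M a a b d = 1 := by
  calc rectangleProduct M a a b d = M a b ^ 2 * M a d ^ 2 := by rw [rectangleProduct]; ring
    _ = 1 := by rw [hM.sq_apply, hM.sq_apply, one_mul]

theorem rectangleProduct_same_column (hM : IsSigning n M) (a c b : Fin n) :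
    rectangleProduct M a c b b = 1 := by
  calc rectangleProduct M a c b b = M a b ^ 2 * M c b ^ 2 := by rw [rectangleProduct]; ring
    _ = 1 := by rw [hM.sq_apply, hM.sq_apply, one_mul]

theorem rectangleProduct_eq_one_or (hM : IsSigning n M) (a c b d : Fin n) :
    rectangleProduct M a c b d = 1 ∨ rectangleProduct M a c b d = -1 := by
  rw [← sq_eq_one_iff, rectangleProduct]
  simp only [mul_pow, hM.sq_apply, mul_one]

theorem one_sub_rectangleProduct (hM : IsSigning n M) (a c b d : Fin n) :
    1 - rectangleProduct M a c b d = if rectangleProduct M a c b d = -1 then 2 else 0 := by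
  rcases hM.rectangleProduct_eq_one_or a c b d with h | h <;> rw [h] <;> rfl

theorem sum_lt_one_sub_rectangleProduct (hM : IsSigning n M) :
    ∑ a, ∑ c with a < c, ∑ b, ∑ d with b < d, (1 - rectangleProduct M a c b d) =
      2 * type2SwitcherCount n M := by
  simp only [hM.one_sub_rectangleProduct, type2SwitcherCount_eq_sum]
  push_cast
  simp only [mul_sum, mul_ite, mul_one, mul_zero]

theorem sum_one_sub_rectangleProduct (hM : IsSigning n M) :
    ∑ a, ∑ c, ∑ b, ∑ d, (1 - rectangleProduct M a c b d) = 8 * type2SwitcherCount n M := by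
  have fold_columns (a c : Fin n) : ∑ b, ∑ d, (1 - rectangleProduct M a c b d) =
      2 • ∑ b, ∑ d with b < d, (1 - rectangleProduct M a c b d) :=
    sum_sum_eq_two_nsmul_sum_sum_lt _
      (fun b d => by rw [rectangleProduct_swap_columns])
      (fun b => by rw [hM.rectangleProduct_same_column, sub_self])
  have fold_rows : ∑ a, ∑ c, ∑ b, ∑ d, (1 - rectangleProduct M a c b d) =
      2 • ∑ a, ∑ c with a < c, ∑ b, ∑ d, (1 - rectangleProduct M a c b d) :=
    sum_sum_eq_two_nsmul_sum_sum_lt _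
      (fun a c => by simp only [rectangleProduct_swap_rows M a c])
      (fun a => by simp only [hM.rectangleProduct_same_row, sub_self, sum_const_zero])
  rw [fold_rows]
  simp only [fold_columns, ← smul_sum]
  rw [hM.sum_lt_one_sub_rectangleProduct, smul_smul, nsmul_eq_mul]
  ring

theorem sum_sq_dotProduct_row (hM : IsSigning n M) :
    ∑ a, ∑ c, (M a ⬝ᵥ M c) ^ 2 = (n : ℤ) ^ 4 - 8 * type2SwitcherCount n M := by
  rw [← hM.sum_one_sub_rectangleProduct]
  simp only [← sum_rectangleProduct_eq_sq_dotProduct, sum_sub_distrib, sum_const, card_univ,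
    Fintype.card_fin, nsmul_eq_mul]
  ring

theorem sum_sq_dotProduct_row_le_sigma1 (hM : IsSigning n M) :
    ((∑ a, ∑ c, (M a ⬝ᵥ M c) ^ 2 : ℤ) : ℝ) ≤ sigma1 n M ^ 2 * n ^ 2 := by
  have entries_sq : ∑ a, ∑ b, (M a b : ℝ) ^ 2 = n ^ 2 := by
    have (a b : Fin n) : (M a b : ℝ) ^ 2 = 1 := mod_cast hM.sq_apply a b
    simp [this, sq]
  calc ((∑ a, ∑ c, (M a ⬝ᵥ M c) ^ 2 : ℤ) : ℝ)
      = ∑ a, ∑ c, ((fun b => (M a b : ℝ)) ⬝ᵥ fun b => (M c b : ℝ)) ^ 2 := by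
        simp only [dotProduct]; push_cast; rfl
    _ ≤ sigma1 n M ^ 2 * ∑ a, ∑ b, (M a b : ℝ) ^ 2 := by
        rw [sigma1_eq_l2_opNorm]
        exact sum_sq_dotProduct_row_le (Matrix.of fun i j => (M i j : ℝ))
    _ = sigma1 n M ^ 2 * n ^ 2 := by rw [entries_sq]

end IsSigning

theorem top_singular_value_lower_bound (n : ℕ) (hn : 1 ≤ n)
    (M : Fin n → Fin n → ℤ) (hM : IsSigning n M) :
    sigma1 n M ^ 2 * n ^ 2 ≥ (n : ℝ) ^ 4 - 8 * type2SwitcherCount n M ∧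
    ∀ α : ℝ, 0 ≤ α → (type2SwitcherCount n M : ℝ) ≤ α ^ 2 * n ^ 4 / 64 →
      sigma1 n M ≥ n * Real.sqrt (1 - α ^ 2 / 8) := by
  have moment : sigma1 n M ^ 2 * n ^ 2 ≥ (n : ℝ) ^ 4 - 8 * type2SwitcherCount n M := by
    have upper := hM.sum_sq_dotProduct_row_le_sigma1
    rw [hM.sum_sq_dotProduct_row] at upper
    exact_mod_cast upper
  refine ⟨moment, fun α _ few => ?_⟩
  have n_pos : (0 : ℝ) < n := mod_cast hn
  have sigma1_nonneg : 0 ≤ sigma1 n M := norm_nonneg _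
  rw [ge_iff_le, ← le_div_iff₀' n_pos]
  refine Real.sqrt_le_iff.mpr ⟨div_nonneg sigma1_nonneg n_pos.le, ?_⟩
  rw [div_pow, le_div_iff₀ (by positivity)]
  refine le_of_mul_le_mul_right ?_ (pow_pos n_pos 2)
  calc (1 - α ^ 2 / 8) * (n : ℝ) ^ 2 * n ^ 2
      = (n : ℝ) ^ 4 - 8 * (α ^ 2 * n ^ 4 / 64) := by ring
    _ ≤ (n : ℝ) ^ 4 - 8 * type2SwitcherCount n M := by gcongr
    _ ≤ sigma1 n M ^ 2 * n ^ 2 := moment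
end
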